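/- Let n, m be positive integers and Θ a real n×m matrix. Then β_×(ᵗΘ) ≥ (n·β_×(Θ) + n − 1) / ((m−1)·β_×(Θ) + m), where if β_×(Θ) = +∞ the right-hand side is interpreted as n/(m−1) when m ≥ 2 and as +∞ when m = 1. -/

import Mathlib

open MeasureTheory Filter Matrix

noncomputable section

/-- Geometric mean of the absolute values of the coordinates: Π(z). -/
def Pigeo {k : ℕ} (z : Fin k → ℝ) : ℝ := (∏ i, |z i|) ^ ((1:ℝ)/k)

/-- Geometric mean of `max 1 |z i|`: Π'(z). -/
def Pigeo' {k : ℕ} (z : Fin k → ℝ) : ℝ := (∏ i, max 1 |z i|) ^ ((1:ℝ)/k)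

/-- Coordinatewise cast of an integer vector to a real vector. -/
def ivec {k : ℕ} (x : Fin k → ℤ) : Fin k → ℝ := fun i => (x i : ℝ)

/-- The constant Δ_d = (2^{d-1}√d)⁻¹ · vol_{d-1}{x ∈ [-1,1]^d : x₁+⋯+x_d = 0}. -/
def Delta (d : ℕ) : ℝ :=
  ((2:ℝ) ^ (d - 1) * Real.sqrt d)⁻¹ *
    (μH[(d:ℝ) - 1] {x : EuclideanSpace ℝ (Fin d) | (∀ i, |x i| ≤ 1) ∧ ∑ i, x i = 0}).toReal

/-- There are infinitely many pairs x ∈ ℤ^m \ {0}, y ∈ ℤ^n with Π(Θx − y) ≤ Π'(x)^{−γ}. -/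
def MultApprox (n m : ℕ) (Θ : Matrix (Fin n) (Fin m) ℝ) (γ : ℝ) : Prop :=
  {p : (Fin m → ℤ) × (Fin n → ℤ) | p.1 ≠ 0 ∧
    Pigeo (Θ.mulVec (ivec p.1) - ivec p.2) ≤ Pigeo' (ivec p.1) ^ (-γ)}.Infinite

/-- The multiplicative Diophantine exponent β_×(Θ), as an extended real number. -/
def mbeta (n m : ℕ) (Θ : Matrix (Fin n) (Fin m) ℝ) : EReal :=
  sSup {x : EReal | ∃ γ : ℝ, x = (γ : EReal) ∧ MultApprox n m Θ γ}

/-!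
For `z = Θx - y` and `z' = Θᵀv - u` the number `⟨z, v⟩ - ⟨x, z'⟩ = ⟨x, u⟩ - ⟨y, v⟩` is an integer.
Given a good approximation `(x, y)`, Minkowski's theorem applied to the lattice of those `(v, u)`
for which this integer vanishes produces `(v, u) ≠ 0` in a box whose sides are adapted to the
coordinates: `|z'_j| ≲ r / max 1 |x_j|` and `|v_i| ≲ max 1 (r / |z_i|)`. The equation
`⟨z, v⟩ = ⟨x, z'⟩` recovers the one coordinate of `z'` which Minkowski's theorem leaves
uncontrolled. Choosing `r` so that the volume condition holds with equality and comparing exponents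
as the height of `x` tends to infinity gives the bound for every exponent below `β_×(Θ)`; passing to
the limit gives it for `β_×(Θ)` itself.
-/

open scoped Topology

section ApproxError

variable {ι κ : Type*} [Fintype κ]

/-- The error `Θ x - y` of the simultaneous integral approximation `(x, y)` to the linear forms
with matrix `Θ`. -/
def approxError (Θ : Matrix ι κ ℝ) (x : κ → ℤ) (y : ι → ℤ) : ι → ℝ :=
  Θ *ᵥ (Int.cast ∘ x) - Int.cast ∘ y

theorem intCast_comp_zsmul {σ : Type*} (c : ℤ) (z : σ → ℤ) :
    (Int.cast ∘ (c • z) : σ → ℝ) = (c : ℝ) • (Int.cast ∘ z) := by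
  ext
  simp

theorem approxError_zsmul (Θ : Matrix ι κ ℝ) (c : ℤ) (x : κ → ℤ) (y : ι → ℤ) :
    approxError Θ (c • x) (c • y) = (c : ℝ) • approxError Θ x y := by
  simp only [approxError, intCast_comp_zsmul, mulVec_smul, smul_sub]

theorem ne_zero_of_forall_abs_approxError_lt_one {Θ : Matrix ι κ ℝ} {x : κ → ℤ} {y : ι → ℤ}
    (h0 : x ≠ 0 ∨ y ≠ 0) (h : ∀ i, |approxError Θ x y i| < 1) : x ≠ 0 := by
  rintro rfl
  refine h0.elim (· rfl) fun hy => hy (funext fun i => Int.abs_lt_one_iff.1 ?_)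
  have hi : |(y i : ℝ)| < 1 := by simpa [approxError, mulVec, dotProduct] using h i
  exact_mod_cast hi

end ApproxError

section LinearForms

variable {ι κ : Type*} [Fintype ι] [Fintype κ]

theorem exists_ne_zero_mem_span_int_abs_le [Nonempty ι] [DecidableEq ι]
    (b : Module.Basis ι ℝ (ι → ℝ)) {C : ι → ℝ} (hC : ∀ i, 0 ≤ C i)
    (h : |(Matrix.of b).det| ≤ ∏ i, C i) :
    ∃ x ∈ Submodule.span ℤ (Set.range b), x ≠ 0 ∧ ∀ i, |x i| ≤ C i := by
  let L := (Submodule.span ℤ (Set.range b)).toAddSubgroup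
  have : Countable L := inferInstanceAs (Countable (Submodule.span ℤ (Set.range b)))
  have : DiscreteTopology L :=
    inferInstanceAs (DiscreteTopology (Submodule.span ℤ (Set.range b)))
  have hvol : volume (ZSpan.fundamentalDomain b) * 2 ^ Module.finrank ℝ (ι → ℝ) ≤
      volume (Set.Icc (-C) C) := by
    have hbox : ∏ i, (C i - (-C) i) = (∏ i, C i) * 2 ^ Fintype.card ι := by
      simp [← mul_two, Finset.prod_mul_distrib]
    rw [ZSpan.volume_fundamentalDomain, Real.volume_Icc_pi,
      ← ENNReal.ofReal_prod_of_nonneg fun i _ => by simpa using hC i, hbox,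
      ENNReal.ofReal_mul' (by positivity), ENNReal.ofReal_pow two_pos.le, ENNReal.ofReal_ofNat,
      Module.finrank_fintype_fun_eq_card]
    gcongr
  obtain ⟨⟨x, hxL⟩, hx0, hx⟩ := exists_ne_zero_mem_lattice_of_measure_mul_two_pow_le_measure
    (L := L) (ZSpan.isAddFundamentalDomain b volume)
    (fun x hx => Set.mem_Icc.2 ⟨neg_le_neg hx.2, neg_le.2 hx.1⟩) (convex_Icc _ _) isCompact_Icc hvol
  exact ⟨x, hxL, fun h0 => hx0 (Subtype.ext h0), fun i => abs_le.2 ⟨hx.1 i, hx.2 i⟩⟩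

theorem exists_int_ne_zero_abs_mulVec_le [Nonempty ι] [DecidableEq ι] {A : Matrix ι ι ℝ}
    (hA : A.det ≠ 0) {C : ι → ℝ} (hC : ∀ i, 0 ≤ C i) (h : |A.det| ≤ ∏ i, C i) :
    ∃ z : ι → ℤ, z ≠ 0 ∧ ∀ i, |(A *ᵥ (Int.cast ∘ z)) i| ≤ C i := by
  have hli : LinearIndependent ℝ Aᵀ.row := by
    rwa [linearIndependent_rows_iff_isUnit, isUnit_iff_isUnit_det, det_transpose,
      isUnit_iff_ne_zero]
  let b : Module.Basis ι ℝ (ι → ℝ) := basisOfLinearIndependentOfCardEqFinrank hli (by simp)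
  have hb : (b : ι → ι → ℝ) = Aᵀ.row := coe_basisOfLinearIndependentOfCardEqFinrank hli _
  have hdet : (Matrix.of b).det = A.det := by
    rw [hb, ← det_transpose A]
    rfl
  obtain ⟨x, hx, hx0, hxC⟩ := exists_ne_zero_mem_span_int_abs_le b hC (hdet ▸ h)
  obtain ⟨z, rfl⟩ := (Submodule.mem_span_range_iff_exists_fun ℤ).1 hx
  have hz : A *ᵥ (Int.cast ∘ z) = ∑ i, z i • b i := by
    rw [hb, mulVec_eq_sum]
    simp only [Function.comp_apply, op_smul_eq_smul, Int.cast_smul_eq_zsmul, Matrix.row]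
  refine ⟨z, ?_, fun i => hz ▸ hxC i⟩
  rintro rfl
  exact hx0 (by simp)

/-- If `c ᵥ* A` is an integral vector, the linear form `c ⬝ᵥ (A *ᵥ ·)` takes integral values, so
bounding it by `1 / 2` in place of the `k`-th form of `A` makes it vanish. -/
theorem exists_int_ne_zero_dotProduct_mulVec_eq_zero [DecidableEq ι] {A : Matrix ι ι ℝ}
    (hA : |A.det| = 1) {c : ι → ℝ} {p : ι → ℤ} (hp : c ᵥ* A = Int.cast ∘ p) {k : ι}
    (hk : c k ≠ 0) {C : ι → ℝ} (hC : ∀ i, 0 < C i) (h : 2 * (C k * |c k|) ≤ ∏ i, C i) :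
    ∃ z : ι → ℤ, z ≠ 0 ∧ c ⬝ᵥ (A *ᵥ (Int.cast ∘ z)) = 0 ∧
      ∀ i ≠ k, |(A *ᵥ (Int.cast ∘ z)) i| ≤ C i := by
  have : Nonempty ι := ⟨k⟩
  have hdet : |(A.updateRow k (c ᵥ* A)).det| = |c k| := by
    rw [vecMul_eq_sum, det_updateRow_sum, smul_eq_mul, abs_mul, hA, mul_one]
  have hprod : |c k| ≤ ∏ i, Function.update C k (1 / 2) i := by
    rw [Finset.prod_update_of_mem (Finset.mem_univ k), Finset.sdiff_singleton_eq_erase]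
    rw [← Finset.mul_prod_erase _ _ (Finset.mem_univ k), mul_left_comm] at h
    linarith [le_of_mul_le_mul_left h (hC k)]
  obtain ⟨z, hz0, hz⟩ := exists_int_ne_zero_abs_mulVec_le (A := A.updateRow k (c ᵥ* A))
    (abs_ne_zero.1 (hdet ▸ abs_ne_zero.2 hk)) (C := Function.update C k (1 / 2))
    (Function.forall_update_iff C (fun _ t => 0 ≤ t) |>.2 ⟨by simp, fun i _ => (hC i).le⟩)
    (hdet ▸ hprod)
  refine ⟨z, hz0, ?_, fun i hi => by simpa [mulVec, updateRow_ne hi, hi] using hz i⟩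
  have hint : c ⬝ᵥ (A *ᵥ (Int.cast ∘ z)) = ((p ⬝ᵥ z : ℤ) : ℝ) := by
    rw [dotProduct_mulVec, hp]
    simp [dotProduct]
  have hlt : |((p ⬝ᵥ z : ℤ) : ℝ)| < 1 := by
    have hzk := hz k
    rw [mulVec, updateRow_self, ← dotProduct_mulVec, hint, Function.update_self] at hzk
    linarith
  rw [hint, Int.abs_lt_one_iff.1 (mod_cast hlt : |p ⬝ᵥ z| < 1), Int.cast_zero]

/-- The matrix of the linear forms `Θ x - y` and `x` in the variables `(y, x)`. -/
def formMatrix [DecidableEq ι] [DecidableEq κ] (Θ : Matrix ι κ ℝ) : Matrix (ι ⊕ κ) (ι ⊕ κ) ℝ :=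
  fromBlocks (-1) Θ 0 1

theorem abs_det_formMatrix [DecidableEq ι] [DecidableEq κ] (Θ : Matrix ι κ ℝ) :
    |(formMatrix Θ).det| = 1 := by
  simp [formMatrix, det_neg]

theorem formMatrix_mulVec_intCast [DecidableEq ι] [DecidableEq κ] (Θ : Matrix ι κ ℝ)
    (w : ι ⊕ κ → ℤ) : formMatrix Θ *ᵥ (Int.cast ∘ w) =
      Sum.elim (approxError Θ (w ∘ Sum.inr) (w ∘ Sum.inl)) (Int.cast ∘ w ∘ Sum.inr) := by
  simp [formMatrix, approxError, fromBlocks_mulVec, neg_mulVec, neg_add_eq_sub, Function.comp_assoc]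

theorem vecMul_formMatrix [DecidableEq ι] [DecidableEq κ] (Θ : Matrix ι κ ℝ) (a : ι → ℝ)
    (b : κ → ℝ) : Sum.elim a b ᵥ* formMatrix Θ = Sum.elim (-a) (a ᵥ* Θ + b) := by
  simp [formMatrix, vecMul_fromBlocks, vecMul_neg]

theorem comp_inr_ne_zero_or_comp_inl_ne_zero {α β : Type*} {w : α ⊕ β → ℤ} (hw : w ≠ 0) :
    w ∘ Sum.inr ≠ 0 ∨ w ∘ Sum.inl ≠ 0 := by
  by_contra! hcon
  exact hw (funext (Sum.rec (congrFun hcon.2) (congrFun hcon.1)))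

theorem exists_int_abs_approxError_le [Nonempty (ι ⊕ κ)] (Θ : Matrix ι κ ℝ)
    {a : ι → ℝ} {b : κ → ℝ} (ha : ∀ i, 0 ≤ a i) (hb : ∀ j, 0 ≤ b j)
    (hab : 1 ≤ (∏ i, a i) * ∏ j, b j) :
    ∃ (x : κ → ℤ) (y : ι → ℤ), (x ≠ 0 ∨ y ≠ 0) ∧
      (∀ i, |approxError Θ x y i| ≤ a i) ∧ ∀ j, |(x j : ℝ)| ≤ b j := by
  classical
  obtain ⟨w, hw0, hw⟩ := exists_int_ne_zero_abs_mulVec_le (A := formMatrix Θ)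
    (abs_ne_zero.1 (by simp [abs_det_formMatrix])) (C := Sum.elim a b)
    (Sum.rec ha hb) (by simpa [abs_det_formMatrix] using hab)
  rw [formMatrix_mulVec_intCast] at hw
  exact ⟨w ∘ Sum.inr, w ∘ Sum.inl, comp_inr_ne_zero_or_comp_inl_ne_zero hw0,
    fun i => hw (.inl i), fun j => hw (.inr j)⟩

/-- For integral `u` and `v` the two sides of the equation differ by the integer
`x ⬝ᵥ u - y ⬝ᵥ v`, so Dirichlet's theorem for `Θᵀ` can be carried out on the hyperplane where they
agree. -/
theorem exists_int_dotProduct_approxError_transpose_eq (Θ : Matrix ι κ ℝ) {x : κ → ℤ} (y : ι → ℤ)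
    {k : κ} (hk : x k ≠ 0) {a : κ → ℝ} {b : ι → ℝ} (ha : ∀ j, 0 < a j) (hb : ∀ i, 0 < b i)
    (h : 2 * (a k * |(x k : ℝ)|) ≤ (∏ j, a j) * ∏ i, b i) :
    ∃ (v : ι → ℤ) (u : κ → ℤ), (v ≠ 0 ∨ u ≠ 0) ∧
      (Int.cast ∘ x) ⬝ᵥ approxError Θᵀ v u = approxError Θ x y ⬝ᵥ (Int.cast ∘ v) ∧
      (∀ j ≠ k, |approxError Θᵀ v u j| ≤ a j) ∧ ∀ i, |(v i : ℝ)| ≤ b i := by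
  classical
  have hp : Sum.elim (-(Int.cast ∘ x)) (approxError Θ x y) ᵥ* formMatrix Θᵀ =
      (Int.cast ∘ Sum.elim x (-y) : κ ⊕ ι → ℝ) := by
    rw [vecMul_formMatrix, neg_neg, neg_vecMul, vecMul_transpose, approxError]
    ext (j | i) <;> simp [sub_eq_add_neg]
  obtain ⟨w, hw0, hdot, hw⟩ := exists_int_ne_zero_dotProduct_mulVec_eq_zero
    (abs_det_formMatrix Θᵀ) hp (k := .inl k) (by simpa using hk) (C := Sum.elim a b)
    (Sum.rec ha hb) (by simpa using h)
  rw [formMatrix_mulVec_intCast] at hdot hw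
  rw [sumElim_dotProduct_sumElim, neg_dotProduct, neg_add_eq_zero] at hdot
  exact ⟨w ∘ Sum.inr, w ∘ Sum.inl, comp_inr_ne_zero_or_comp_inl_ne_zero hw0, hdot,
    fun j hj => hw (.inl j) (by simpa using hj), fun i => hw (.inr i) (by simp)⟩

end LinearForms

section Transference

variable {ι κ : Type*} [Fintype ι] [Fintype κ]

theorem abs_mul_le_card_mul_of_dotProduct_eq {c w : κ → ℝ} {d t : ι → ℝ} {r : ℝ} (hr : 0 ≤ r)
    {k : κ} (h : c ⬝ᵥ w = d ⬝ᵥ t) (hcw : ∀ j ≠ k, |c j * w j| ≤ r) (hdt : ∀ i, |d i * t i| ≤ r) :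
    |c k * w k| ≤ (Fintype.card κ + Fintype.card ι) * r := by
  classical
  have hk : c k * w k = (∑ i, d i * t i) - ∑ j ∈ Finset.univ.erase k, c j * w j := by
    rw [eq_sub_iff_add_eq, Finset.add_sum_erase _ (fun j => c j * w j) (Finset.mem_univ k)]
    exact h
  have hd : |∑ i, d i * t i| ≤ Fintype.card ι * r := by
    refine (Finset.abs_sum_le_sum_abs _ _).trans ?_
    simpa using Finset.sum_le_card_nsmul Finset.univ _ r fun i _ => hdt i
  have hc : |∑ j ∈ Finset.univ.erase k, c j * w j| ≤ Fintype.card κ * r :=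
    calc |∑ j ∈ Finset.univ.erase k, c j * w j|
        ≤ ∑ j ∈ Finset.univ.erase k, |c j * w j| := Finset.abs_sum_le_sum_abs _ _
      _ ≤ (Finset.univ.erase k).card • r :=
        Finset.sum_le_card_nsmul _ _ _ fun j hj => hcw j (Finset.ne_of_mem_erase hj)
      _ ≤ Fintype.card κ * r := by
        rw [nsmul_eq_mul]
        gcongr
        exact Finset.card_le_univ _
  rw [hk, add_mul]
  linarith [abs_sub (∑ i, d i * t i) (∑ j ∈ Finset.univ.erase k, c j * w j)]

theorem abs_mul_intCast_le_of_le_half_max {z μ r : ℝ} {v : ℤ} (hμ : 0 < μ) (hr : 0 ≤ r)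
    (hz : |z| ≤ μ) (hv : |(v : ℝ)| ≤ 1 / 2 * max 1 (r / μ)) : |z * v| ≤ r := by
  rcases le_total (r / μ) 1 with hrμ | hrμ
  · have hlt : |(v : ℝ)| < 1 := by
      rw [max_eq_left hrμ] at hv
      linarith
    have hv0 : v = 0 := Int.abs_lt_one_iff.1 (by exact_mod_cast hlt)
    simpa [hv0] using hr
  · rw [max_eq_right hrμ] at hv
    calc |z * v| = |z| * |(v : ℝ)| := abs_mul _ _
      _ ≤ μ * (r / μ) := by gcongr; linarith
      _ = r := mul_div_cancel₀ r hμ.ne.symm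

/-- In the box `|(Θᵀ v - u) j| ≤ r / max 1 |x j|`, `|v i| ≤ max 1 (r / μ i) / 2` every term of the
orthogonality relation, save the one at a `k` with `x k ≠ 0`, is at most `r`; the relation then
bounds the remaining term, at the cost of the factor `card κ + card ι`. -/
theorem exists_int_abs_approxError_transpose_le (Θ : Matrix ι κ ℝ) {x : κ → ℤ} (hx : x ≠ 0)
    {y : ι → ℤ} {μ : ι → ℝ} (hμ : ∀ i, 0 < μ i) (hz : ∀ i, |approxError Θ x y i| ≤ μ i)
    {r : ℝ} (hr : 0 < r)
    (h : 2 ^ (Fintype.card ι + 1) * (∏ j, max 1 |(x j : ℝ)|) * r ≤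
      r ^ Fintype.card κ * ∏ i, max 1 (r / μ i)) :
    ∃ (v : ι → ℤ) (u : κ → ℤ), (v ≠ 0 ∨ u ≠ 0) ∧
      (∀ j, |approxError Θᵀ v u j| ≤
        (Fintype.card κ + Fintype.card ι) * r / max 1 |(x j : ℝ)|) ∧
      ∀ i, max 1 |(v i : ℝ)| ≤ max 1 (r / μ i) := by
  obtain ⟨k, hk⟩ := Function.ne_iff.1 hx
  have hxk : 1 ≤ |(x k : ℝ)| := by exact_mod_cast Int.one_le_abs hk
  have hxpos (j) : 0 < max 1 |(x j : ℝ)| := lt_max_of_lt_left one_pos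
  have hbox : 2 * (r / max 1 |(x k : ℝ)| * |(x k : ℝ)|) ≤
      (∏ j, r / max 1 |(x j : ℝ)|) * ∏ i, 1 / 2 * max 1 (r / μ i) := by
    have : 0 < ∏ j, max 1 |(x j : ℝ)| := Finset.prod_pos fun j _ => hxpos j
    rw [max_eq_right hxk, div_mul_cancel₀ _ (by positivity), Finset.prod_div_distrib,
      Finset.prod_mul_distrib, Finset.prod_const, Finset.prod_const, Finset.card_univ,
      Finset.card_univ, one_div, inv_pow, ← div_eq_inv_mul, div_mul_div_comm,
      le_div_iff₀ (by positivity)]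
    linear_combination h
  obtain ⟨v, u, hvu, hdot, hu, hv⟩ := exists_int_dotProduct_approxError_transpose_eq Θ y hk
    (fun j => div_pos hr (hxpos j))
    (fun i => mul_pos one_half_pos (lt_max_of_lt_left one_pos : 0 < max 1 (r / μ i))) hbox
  have hxu (j) (hj : j ≠ k) : |(x j : ℝ) * approxError Θᵀ v u j| ≤ r :=
    calc |(x j : ℝ) * approxError Θᵀ v u j| = |(x j : ℝ)| * |approxError Θᵀ v u j| := abs_mul _ _
      _ ≤ max 1 |(x j : ℝ)| * (r / max 1 |(x j : ℝ)|) := by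
        gcongr
        exacts [le_max_right _ _, hu j hj]
      _ = r := mul_div_cancel₀ _ (hxpos j).ne'
  have hcard : (1 : ℝ) ≤ Fintype.card κ + Fintype.card ι := by
    exact_mod_cast (Fintype.card_pos_iff.2 ⟨k⟩).trans_le (Nat.le_add_right _ _)
  refine ⟨v, u, hvu, fun j => ?_, fun i => ?_⟩
  · rcases eq_or_ne j k with rfl | hj
    · rw [max_eq_right hxk, le_div_iff₀' (by positivity), ← abs_mul]
      exact abs_mul_le_card_mul_of_dotProduct_eq hr.le hdot hxu
        fun i => abs_mul_intCast_le_of_le_half_max (hμ i) hr.le (hz i) (hv i)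
    · refine (hu j hj).trans ?_
      gcongr
      exact le_mul_of_one_le_left hr.le hcard
  · have hpos : 0 < max 1 (r / μ i) := lt_max_of_lt_left one_pos
    exact max_le (le_max_left _ _) ((hv i).trans (by linarith))

theorem exists_pos_abs_le_prod_lt (z : ι → ℝ) {b : ℝ} (hb : ∏ i, |z i| < b) :
    ∃ μ : ι → ℝ, (∀ i, 0 < μ i) ∧ (∀ i, |z i| ≤ μ i) ∧ ∏ i, μ i < b := by
  have hcont : Continuous fun η : ℝ => ∏ i, (|z i| + η) := by fun_prop
  have hev : ∀ᶠ η in 𝓝[>] (0 : ℝ), ∏ i, (|z i| + η) < b :=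
    hcont.continuousWithinAt.eventually_lt_const (by simpa using hb)
  obtain ⟨η, hη, hpos : 0 < η⟩ := (hev.and self_mem_nhdsWithin).exists
  exact ⟨fun i => |z i| + η, fun i => by positivity, fun i => by linarith, hη⟩

theorem pow_card_le_prod_max_one_div_mul_prod {μ : ι → ℝ} (hμ : ∀ i, 0 < μ i) {r : ℝ} (hr : 0 ≤ r) :
    r ^ Fintype.card ι ≤ (∏ i, max 1 (r / μ i)) * ∏ i, μ i := by
  rw [← div_le_iff₀ (Finset.prod_pos fun i _ => hμ i)]
  calc r ^ Fintype.card ι / ∏ i, μ i = ∏ i, r / μ i := by simp [Finset.prod_div_distrib]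
    _ ≤ ∏ i, max 1 (r / μ i) :=
      Finset.prod_le_prod (fun i _ => div_nonneg hr (hμ i).le) fun i _ => le_max_right _ _

theorem exists_pow_mul_prod_max_one_div_eq [Nonempty ι] {μ : ι → ℝ} (hμ : ∀ i, 0 < μ i) (d : ℕ)
    {K : ℝ} (hK : 1 < K) : ∃ r : ℝ, 0 < r ∧ r ^ d * ∏ i, max 1 (r / μ i) = K := by
  set g : ℝ → ℝ := fun r => r ^ d * ∏ i, max 1 (r / μ i)
  have hg : Continuous g := by fun_prop
  have hg0 : g 0 ≤ 1 := by
    simpa [g] using pow_le_one₀ le_rfl zero_le_one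
  set R := max 1 (K * ∏ i, μ i)
  have hR : 1 ≤ R := le_max_left _ _
  have hgR : K ≤ g R := by
    refine le_of_mul_le_mul_right ?_ (Finset.prod_pos fun i _ => hμ i : 0 < ∏ i, μ i)
    calc K * ∏ i, μ i ≤ R := le_max_right _ _
      _ ≤ R ^ Fintype.card ι := le_self_pow₀ hR Fintype.card_ne_zero
      _ ≤ (∏ i, max 1 (R / μ i)) * ∏ i, μ i :=
        pow_card_le_prod_max_one_div_mul_prod hμ (by positivity)
      _ ≤ g R * ∏ i, μ i := by
        refine mul_le_mul_of_nonneg_right (le_mul_of_one_le_left ?_ (one_le_pow₀ hR))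
          (Finset.prod_nonneg fun i _ => (hμ i).le)
        positivity
  obtain ⟨r, hr, hgr⟩ := intermediate_value_Icc (zero_le_one.trans hR) hg.continuousOn
    ⟨hg0.trans hK.le, hgR⟩
  refine ⟨r, hr.1.lt_of_ne ?_, hgr⟩
  rintro rfl
  linarith

theorem exists_int_approxError_transpose [Nonempty ι] (Θ : Matrix ι κ ℝ) {x : κ → ℤ} (hx : x ≠ 0)
    {y : ι → ℤ} {P : ℝ} (hP : ∏ i, |approxError Θ x y i| < P) :
    ∃ (r : ℝ) (v : ι → ℤ) (u : κ → ℤ), 0 < r ∧ (v ≠ 0 ∨ u ≠ 0) ∧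
      (∀ j, |approxError Θᵀ v u j| ≤
        (Fintype.card κ + Fintype.card ι) * r / max 1 |(x j : ℝ)|) ∧
      r ^ (Fintype.card κ - 1 + Fintype.card ι) ≤
        2 ^ (Fintype.card ι + 1) * (∏ j, max 1 |(x j : ℝ)|) * P ∧
      r ^ (Fintype.card κ - 1) * ∏ i, max 1 |(v i : ℝ)| ≤
        2 ^ (Fintype.card ι + 1) * ∏ j, max 1 |(x j : ℝ)| := by
  have : Nonempty κ := ⟨(Function.ne_iff.1 hx).choose⟩
  obtain ⟨μ, hμ, hzμ, hμP⟩ := exists_pos_abs_le_prod_lt _ hP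
  have hQ : 1 ≤ ∏ j, max 1 |(x j : ℝ)| := Finset.one_le_prod fun _ _ => le_max_left _ _
  obtain ⟨r, hr, hrK⟩ := exists_pow_mul_prod_max_one_div_eq hμ (Fintype.card κ - 1)
    (one_lt_mul_of_lt_of_le (one_lt_pow₀ one_lt_two (Fintype.card ι).succ_ne_zero) hQ)
  obtain ⟨v, u, hvu, hu, hv⟩ := exists_int_abs_approxError_transpose_le Θ hx hμ hzμ hr (by
    rw [← hrK, ← Nat.sub_add_cancel (Fintype.card_pos (α := κ)), pow_succ, Nat.add_sub_cancel,
      mul_right_comm])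
  refine ⟨r, v, u, hr, hvu, hu, ?_, ?_⟩
  · calc r ^ (Fintype.card κ - 1 + Fintype.card ι)
        ≤ r ^ (Fintype.card κ - 1) * ((∏ i, max 1 (r / μ i)) * ∏ i, μ i) := by
          rw [pow_add]
          gcongr
          exact pow_card_le_prod_max_one_div_mul_prod hμ hr.le
      _ ≤ 2 ^ (Fintype.card ι + 1) * (∏ j, max 1 |(x j : ℝ)|) * P := by
          rw [← mul_assoc, hrK]
          gcongr
  · rw [← hrK]
    gcongr _ * ∏ i, ?_ with i
    exact hv i

end Transference

section GeometricMean

variable {k : ℕ}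

theorem pigeo_nonneg (z : Fin k → ℝ) : 0 ≤ Pigeo z :=
  Real.rpow_nonneg (Finset.prod_nonneg fun _ _ => abs_nonneg _) _

theorem one_le_pigeo' (z : Fin k → ℝ) : 1 ≤ Pigeo' z :=
  Real.one_le_rpow (Finset.one_le_prod fun _ _ => le_max_left _ _) (by positivity)

theorem pigeo'_pos (z : Fin k → ℝ) : 0 < Pigeo' z :=
  one_pos.trans_le (one_le_pigeo' z)

theorem pigeo_pow (z : Fin k → ℝ) : Pigeo z ^ k = ∏ i, |z i| := by
  rcases eq_or_ne k 0 with rfl | hk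
  · simp
  · rw [Pigeo, one_div,
      Real.rpow_inv_natCast_pow (Finset.prod_nonneg fun _ _ => abs_nonneg _) hk]

theorem pigeo'_pow (z : Fin k → ℝ) : Pigeo' z ^ k = ∏ i, max 1 |z i| := by
  rcases eq_or_ne k 0 with rfl | hk
  · simp
  · rw [Pigeo', one_div, Real.rpow_inv_natCast_pow
      (zero_le_one.trans (Finset.one_le_prod fun _ _ => le_max_left _ _)) hk]

theorem pigeo_le_iff (hk : k ≠ 0) {z : Fin k → ℝ} {b : ℝ} (hb : 0 ≤ b) :
    Pigeo z ≤ b ↔ ∏ i, |z i| ≤ b ^ k := by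
  rw [← pigeo_pow, pow_le_pow_iff_left₀ (pigeo_nonneg z) hb hk]

theorem pigeo'_le_of_forall_abs_le (hk : k ≠ 0) {z : Fin k → ℝ} {b : ℝ} (hb : 1 ≤ b)
    (h : ∀ i, |z i| ≤ b) : Pigeo' z ≤ b := by
  rw [← pow_le_pow_iff_left₀ (pigeo'_pos z).le (zero_le_one.trans hb) hk, pigeo'_pow]
  simpa using Finset.prod_le_prod (s := Finset.univ) (fun i _ => le_max_of_le_left zero_le_one)
    fun i _ => max_le hb (h i)

theorem abs_le_pigeo'_pow (z : Fin k → ℝ) (i : Fin k) : |z i| ≤ Pigeo' z ^ k := by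
  simp only [pigeo'_pow, max_comm (1 : ℝ)]
  exact Finset.le_prod_max_one (Finset.mem_univ i) fun i => |z i|

theorem pigeo_eq_zero_iff {z : Fin k → ℝ} : Pigeo z = 0 ↔ ∃ i, z i = 0 := by
  rw [Pigeo, Real.rpow_eq_zero_iff_of_nonneg (Finset.prod_nonneg fun _ _ => abs_nonneg _),
    Finset.prod_eq_zero_iff]
  simp only [Finset.mem_univ, abs_eq_zero, true_and, and_iff_left_iff_imp]
  rintro ⟨i, -⟩
  have := i.pos
  positivity

theorem finite_setOf_pigeo'_intCast_lt (M : ℝ) :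
    {x : Fin k → ℤ | Pigeo' (ivec x) < M}.Finite := by
  refine (Set.finite_Icc (fun _ => -⌈M ^ k⌉) fun _ => ⌈M ^ k⌉).subset fun x hx => ?_
  have hxM (j) : |x j| ≤ ⌈M ^ k⌉ := by
    rw [← Int.cast_le (R := ℝ), Int.cast_abs]
    calc |(x j : ℝ)| ≤ Pigeo' (ivec x) ^ k := abs_le_pigeo'_pow (ivec x) j
      _ ≤ M ^ k := pow_le_pow_left₀ (pigeo'_pos _).le (le_of_lt hx) k
      _ ≤ ⌈M ^ k⌉ := Int.le_ceil _
  exact ⟨fun j => (abs_le.1 (hxM j)).1, fun j => (abs_le.1 (hxM j)).2⟩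

end GeometricMean

section Solutions

theorem finite_setOf_prod_abs_sub_intCast_le {ι : Type*} [Fintype ι] {t : ι → ℝ}
    (ht : ∀ i (y : ℤ), t i ≠ y) (B : ℝ) :
    {y : ι → ℤ | ∏ i, |t i - y i| ≤ B}.Finite := by
  classical
  set d : ι → ℝ := fun i => |t i - round (t i)|
  have hd (i) : 0 < d i := abs_pos.2 (sub_ne_zero.2 (ht i _))
  have hdprod (i) : 0 < ∏ l ∈ Finset.univ.erase i, d l := Finset.prod_pos fun l _ => hd l
  set c : ι → ℝ := fun i => B / ∏ l ∈ Finset.univ.erase i, d l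
  refine (Set.finite_Icc (fun i => ⌈t i - c i⌉) fun i => ⌊t i + c i⌋).subset fun y hy => ?_
  have hc (i) : |t i - y i| ≤ c i := by
    rw [le_div_iff₀ (hdprod i)]
    calc |t i - y i| * ∏ l ∈ Finset.univ.erase i, d l
        ≤ |t i - y i| * ∏ l ∈ Finset.univ.erase i, |t l - y l| := by
          gcongr with l
          exact round_le (t l) (y l)
      _ = ∏ i, |t i - y i| := Finset.mul_prod_erase _ (fun l => |t l - y l|) (Finset.mem_univ i)
      _ ≤ B := hy
  exact ⟨fun i => Int.ceil_le.2 (by linarith [(abs_le.1 (hc i)).2]),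
    fun i => Int.le_floor.2 (by linarith [(abs_le.1 (hc i)).1])⟩

variable {n m : ℕ} {Θ : Matrix (Fin n) (Fin m) ℝ} {γ : ℝ}

/-- The set of solutions whose infinitude is asserted by `MultApprox`. -/
def multApproxSet (Θ : Matrix (Fin n) (Fin m) ℝ) (γ : ℝ) : Set ((Fin m → ℤ) × (Fin n → ℤ)) :=
  {p | p.1 ≠ 0 ∧ Pigeo (approxError Θ p.1 p.2) ≤ Pigeo' (ivec p.1) ^ (-γ)}

theorem multApprox_iff_infinite_multApproxSet :
    MultApprox n m Θ γ ↔ (multApproxSet Θ γ).Infinite :=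
  Iff.rfl

theorem zsmul_mem_multApproxSet_of_apply_eq_zero {x : Fin m → ℤ} {y : Fin n → ℤ} (hx : x ≠ 0)
    {i : Fin n} (hi : approxError Θ x y i = 0) {c : ℤ} (hc : c ≠ 0) :
    (c • x, c • y) ∈ multApproxSet Θ γ := by
  refine ⟨smul_ne_zero hc hx, ?_⟩
  rw [approxError_zsmul, pigeo_eq_zero_iff.2 ⟨i, by simp [hi]⟩]
  exact Real.rpow_nonneg (pigeo'_pos _).le _

theorem infinite_image_fst_multApproxSet_of_apply_eq_zero {x : Fin m → ℤ} {y : Fin n → ℤ}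
    (hx : x ≠ 0) {i : Fin n} (hi : approxError Θ x y i = 0) :
    (Prod.fst '' multApproxSet Θ γ).Infinite := by
  have hinj : Function.Injective fun c : ℕ => ((c : ℤ) + 1) • x := fun a b hab => by
    simpa using smul_left_injective ℤ hx hab
  refine (Set.infinite_range_of_injective hinj).mono ?_
  rintro _ ⟨c, rfl⟩
  exact ⟨_, zsmul_mem_multApproxSet_of_apply_eq_zero hx hi (by omega), rfl⟩

theorem MultApprox.infinite_image_fst (h : MultApprox n m Θ γ) (hγ : 0 ≤ γ) :
    (Prod.fst '' multApproxSet Θ γ).Infinite := by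
  by_cases hzero : ∃ (x : Fin m → ℤ) (y : Fin n → ℤ) (i : Fin n), x ≠ 0 ∧ approxError Θ x y i = 0
  · obtain ⟨x, y, i, hx, hi⟩ := hzero
    exact infinite_image_fst_multApproxSet_of_apply_eq_zero hx hi
  push Not at hzero
  refine fun hfin => multApprox_iff_infinite_multApproxSet.1 h <|
    Set.Finite.of_finite_fibers Prod.fst hfin fun x hx => ?_
  have hx0 : x ≠ 0 := by
    obtain ⟨p, hp, rfl⟩ := hx
    exact hp.1
  refine ((Set.finite_singleton x).prod (finite_setOf_prod_abs_sub_intCast_le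
    (t := Θ *ᵥ ivec x) (fun i y hy => hzero x (fun _ => y) i hx0 (sub_eq_zero.2 hy)) 1)).subset ?_
  rintro ⟨x, y⟩ ⟨⟨-, hy⟩, rfl⟩
  refine ⟨rfl, ?_⟩
  calc ∏ i, |approxError Θ x y i| = Pigeo (approxError Θ x y) ^ n := (pigeo_pow _).symm
    _ ≤ 1 := pow_le_one₀ (pigeo_nonneg _) (hy.trans
      (Real.rpow_le_one_of_one_le_of_nonpos (one_le_pigeo' _) (neg_nonpos.2 hγ)))

theorem MultApprox.exists_le_pigeo' (h : MultApprox n m Θ γ) (hγ : 0 ≤ γ) (M : ℝ) :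
    ∃ (x : Fin m → ℤ) (y : Fin n → ℤ), x ≠ 0 ∧
      Pigeo (approxError Θ x y) ≤ Pigeo' (ivec x) ^ (-γ) ∧ M ≤ Pigeo' (ivec x) := by
  obtain ⟨_, ⟨p, hp, rfl⟩, hpM⟩ :=
    (h.infinite_image_fst hγ).exists_notMem_finite (finite_setOf_pigeo'_intCast_lt M)
  exact ⟨p.1, p.2, hp.1, hp.2, not_lt.1 hpM⟩

theorem MultApprox.of_forall_exists_lt
    (h : ∀ ε > 0, ∃ p ∈ multApproxSet Θ γ, Pigeo (approxError Θ p.1 p.2) < ε) :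
    MultApprox n m Θ γ := by
  rw [multApprox_iff_infinite_multApproxSet]
  by_cases hzero : ∃ p ∈ multApproxSet Θ γ, Pigeo (approxError Θ p.1 p.2) = 0
  · obtain ⟨p, ⟨hp, -⟩, hp0⟩ := hzero
    obtain ⟨i, hi⟩ := pigeo_eq_zero_iff.1 hp0
    exact (infinite_image_fst_multApproxSet_of_apply_eq_zero hp hi).of_image
  push Not at hzero
  intro hfin
  obtain ⟨p₁, hp₁, -⟩ := h 1 one_pos
  obtain ⟨p, hp, hmin⟩ :=
    hfin.exists_minimalFor (fun p => Pigeo (approxError Θ p.1 p.2)) _ ⟨p₁, hp₁⟩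
  obtain ⟨q, hq, hlt⟩ := h _ ((pigeo_nonneg _).lt_of_ne' (hzero p hp))
  exact hlt.not_ge (hmin hq hlt.le)

theorem multApprox_div (hn : 0 < n) (hm : 0 < m) (Θ : Matrix (Fin n) (Fin m) ℝ) :
    MultApprox n m Θ (m / n) := by
  refine MultApprox.of_forall_exists_lt fun ε hε => ?_
  set T : ℝ := max 2 (2 / ε)
  have hT : 1 < T := one_lt_two.trans_le (le_max_left _ _)
  have hT0 : 0 < T := one_pos.trans hT
  have hTε : (T ^ m)⁻¹ < ε := by
    have hle : 2 / ε ≤ T ^ m := (le_max_right _ _).trans (le_self_pow₀ hT.le hm.ne')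
    rw [div_le_iff₀ hε] at hle
    rw [inv_lt_iff_one_lt_mul₀ (by positivity)]
    linarith
  have : Nonempty (Fin n ⊕ Fin m) := ⟨.inl ⟨0, hn⟩⟩
  obtain ⟨x, y, hxy, hy, hx⟩ := exists_int_abs_approxError_le Θ (a := fun _ => (T ^ m)⁻¹)
    (b := fun _ => T ^ n) (fun _ => by positivity) (fun _ => by positivity) (by
      simp [← pow_mul, mul_comm n m, hT0.ne'])
  have hPi : Pigeo (approxError Θ x y) ≤ (T ^ m)⁻¹ := by
    rw [pigeo_le_iff hn.ne' (by positivity)]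
    simpa using Finset.prod_le_prod (s := Finset.univ) (fun i _ => abs_nonneg _) fun i _ => hy i
  refine ⟨(x, y), ⟨ne_zero_of_forall_abs_approxError_lt_one hxy fun i => (hy i).trans_lt
    (inv_lt_one_of_one_lt₀ (one_lt_pow₀ hT hm.ne')), ?_⟩, hPi.trans_lt hTε⟩
  calc Pigeo (approxError Θ x y) ≤ (T ^ m)⁻¹ := hPi
    _ = (T ^ n) ^ (-((m : ℝ) / n)) := by
      rw [← Real.rpow_natCast_mul hT0.le, ← Real.rpow_natCast, ← Real.rpow_neg hT0.le]
      congr 1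
      field_simp
    _ ≤ Pigeo' (ivec x) ^ (-((m : ℝ) / n)) := Real.rpow_le_rpow_of_nonpos (pigeo'_pos _)
      (pigeo'_le_of_forall_abs_le hm.ne' (one_le_pow₀ hT.le) hx) (neg_nonpos.2 (by positivity))

end Solutions

section Exponents

theorem eventually_exponent_bounds {n m γ f : ℝ} (hn : 0 < n) (hm : 1 ≤ m) (hγ : m < n * γ)
    (hf : 0 ≤ f) (hfγ : f * ((m - 1) * γ + m) < n * γ + n - 1) (L c₁ c₂ : ℝ) :
    ∀ᶠ t in atTop, ∀ s τ : ℝ, (m - 1 + n) * s ≤ c₁ - (n * γ - m) * t →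
      (m - 1) * s + n * τ ≤ c₂ + m * t → L + s < 0 ∧ L + s - t ≤ -(f * τ) := by
  set E := m - 1 + n
  have hE : 0 < E := by simp only [E]; linarith
  have hγ0 : 0 < γ := pos_of_mul_pos_right (by linarith) hn.le
  have hfn : 0 ≤ n - f * (m - 1) := by
    by_contra! hneg
    have : n * γ < f * (m - 1) * γ := by
      gcongr
      linarith
    linarith
  have hlin (a : ℝ) {b : ℝ} (hb : 0 < b) : ∀ᶠ t in atTop, a < b * t :=
    (tendsto_id.const_mul_atTop hb).eventually_gt_atTop a
  filter_upwards [hlin (E * L + c₁) (sub_pos.2 hγ),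
    hlin (E * (n * L + f * c₂) + (n - f * (m - 1)) * c₁) (mul_pos hn (sub_pos.2 hfγ))]
    with t hsmall hexp s τ hs hτ
  constructor
  · refine neg_of_mul_neg_right (a := E) ?_ hE.le
    linarith
  · suffices E * (n * (L + s - t + f * τ)) ≤ 0 by
      linarith [nonpos_of_mul_nonpos_right (nonpos_of_mul_nonpos_right this hE) hn]
    calc E * (n * (L + s - t + f * τ))
        = E * (n * (L + s - t) - f * ((m - 1) * s)) + E * f * ((m - 1) * s + n * τ) := by ring
      _ ≤ E * (n * (L + s - t) - f * ((m - 1) * s)) + E * f * (c₂ + m * t) := by gcongr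
      _ = E * (n * L + f * c₂) - E * (n - f * m) * t + (n - f * (m - 1)) * (E * s) := by ring
      _ ≤ E * (n * L + f * c₂) - E * (n - f * m) * t +
          (n - f * (m - 1)) * (c₁ - (n * γ - m) * t) := by gcongr
      _ = E * (n * L + f * c₂) + (n - f * (m - 1)) * c₁ -
          n * (n * γ + n - 1 - f * ((m - 1) * γ + m)) * t := by simp only [E]; ring
      _ ≤ 0 := by linarith

variable {n m : ℕ} {Θ : Matrix (Fin n) (Fin m) ℝ} {γ f : ℝ}

theorem exists_int_pigeo_approxError_transpose (hn : 0 < n) (Θ : Matrix (Fin n) (Fin m) ℝ)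
    {x : Fin m → ℤ} (hx : x ≠ 0) {y : Fin n → ℤ} {Z : ℝ} (hZ : Pigeo (approxError Θ x y) < Z) :
    ∃ (r : ℝ) (v : Fin n → ℤ) (u : Fin m → ℤ), 0 < r ∧ (v ≠ 0 ∨ u ≠ 0) ∧
      (∀ j, |approxError Θᵀ v u j| ≤ (m + n) * r) ∧
      Pigeo (approxError Θᵀ v u) ≤ (m + n) * r / Pigeo' (ivec x) ∧
      r ^ (m - 1 + n) ≤ 2 ^ (n + 1) * Pigeo' (ivec x) ^ m * Z ^ n ∧
      r ^ (m - 1) * Pigeo' (ivec v) ^ n ≤ 2 ^ (n + 1) * Pigeo' (ivec x) ^ m := by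
  have : Nonempty (Fin n) := ⟨0, hn⟩
  have hm : m ≠ 0 := (Function.ne_iff.1 hx).choose.pos.ne'
  have hP : ∏ i, |approxError Θ x y i| < Z ^ n := by
    rw [← pigeo_pow]
    exact pow_lt_pow_left₀ hZ (pigeo_nonneg _) hn.ne'
  obtain ⟨r, v, u, hr, hvu, hu, hrP, hrv⟩ := exists_int_approxError_transpose Θ hx hP
  simp only [Fintype.card_fin] at hu hrP hrv
  have hX := pigeo'_pos (ivec x)
  refine ⟨r, v, u, hr, hvu, fun j => (hu j).trans ?_, ?_, ?_, ?_⟩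
  · exact div_le_self (by positivity) (le_max_left _ _)
  · rw [pigeo_le_iff hm (by positivity), div_pow, pigeo'_pow]
    calc ∏ j, |approxError Θᵀ v u j| ≤ ∏ j : Fin m, ((m + n) * r / max 1 |(x j : ℝ)|) :=
          Finset.prod_le_prod (fun _ _ => abs_nonneg _) fun j _ => hu j
      _ = ((m + n) * r) ^ m / ∏ j, max 1 |ivec x j| := by
        simp [Finset.prod_div_distrib, ivec]
  · rwa [pigeo'_pow]
  · rwa [pigeo'_pow, pigeo'_pow]

theorem exists_int_log_approxError_transpose (hn : 0 < n) {x : Fin m → ℤ} (hx : x ≠ 0)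
    {y : Fin n → ℤ} (hxy : Pigeo (approxError Θ x y) ≤ Pigeo' (ivec x) ^ (-γ)) :
    ∃ (s : ℝ) (v : Fin n → ℤ) (u : Fin m → ℤ), (v ≠ 0 ∨ u ≠ 0) ∧
      (∀ j, |approxError Θᵀ v u j| ≤ Real.exp (Real.log (m + n) + s)) ∧
      Pigeo (approxError Θᵀ v u) ≤
        Real.exp (Real.log (m + n) + s - Real.log (Pigeo' (ivec x))) ∧
      (m - 1 + n) * s ≤
        (2 * n + 1) * Real.log 2 - (n * γ - m) * Real.log (Pigeo' (ivec x)) ∧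
      (m - 1) * s + n * Real.log (Pigeo' (ivec v)) ≤
        (n + 1) * Real.log 2 + m * Real.log (Pigeo' (ivec x)) := by
  have hm : 0 < m := (Function.ne_iff.1 hx).choose.pos
  have hX := pigeo'_pos (ivec x)
  have hXγ := Real.rpow_pos_of_pos hX (-γ)
  obtain ⟨r, v, u, hr, hvu, hu, hPi, hrX, hrV⟩ := exists_int_pigeo_approxError_transpose hn Θ hx
    (hxy.trans_lt (lt_two_mul_self hXγ))
  have hV := pigeo'_pos (ivec v)
  have hexp : Real.exp (Real.log (m + n) + Real.log r) = (m + n) * r := by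
    rw [Real.exp_add, Real.exp_log (by positivity), Real.exp_log hr]
  refine ⟨Real.log r, v, u, hvu, by rwa [hexp], ?_, ?_, ?_⟩
  · rwa [Real.exp_sub, hexp, Real.exp_log hX]
  · have hlog := Real.log_le_log (by positivity) hrX
    rw [Real.log_mul (by positivity) (by positivity), Real.log_mul (by positivity) (by positivity)]
      at hlog
    simp only [Real.log_pow, Real.log_mul two_ne_zero hXγ.ne', Real.log_rpow hX, Nat.cast_add,
      Nat.cast_pred hm, Nat.cast_one] at hlog
    linarith
  · have hlog := Real.log_le_log (by positivity) hrV
    rw [Real.log_mul (by positivity) (by positivity), Real.log_mul (by positivity) (by positivity)]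
      at hlog
    simpa only [Real.log_pow, Nat.cast_add, Nat.cast_pred hm, Nat.cast_one] using hlog

/-- The right-hand side of Dyson's transference inequality: the exponent that `γ` for an `n × m`
matrix guarantees for its transpose. -/
def dysonBound (n m : ℕ) (γ : ℝ) : ℝ :=
  (n * γ + n - 1) / ((m - 1) * γ + m)

theorem dysonBound_den_pos (hm : 0 < m) (hγ : 0 ≤ γ) : 0 < ((m : ℝ) - 1) * γ + m := by
  have hm1 : (1 : ℝ) ≤ m := by exact_mod_cast hm
  nlinarith

theorem MultApprox.transpose (h : MultApprox n m Θ γ) (hn : 0 < n) (hm : 0 < m)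
    (hγ : (m : ℝ) / n < γ) (hf : 0 ≤ f) (hfγ : f < dysonBound n m γ) : MultApprox m n Θᵀ f := by
  have hn0 : (0 : ℝ) < n := by exact_mod_cast hn
  have hm1 : (1 : ℝ) ≤ m := by exact_mod_cast hm
  have hγ0 : 0 ≤ γ := (by positivity : (0 : ℝ) ≤ m / n).trans hγ.le
  rw [dysonBound, lt_div_iff₀ (dysonBound_den_pos hm hγ0)] at hfγ
  refine MultApprox.of_forall_exists_lt fun ε hε => ?_
  obtain ⟨t₀, ht₀⟩ := eventually_atTop.1 <| (eventually_exponent_bounds hn0 hm1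
    ((div_lt_iff₀' hn0).1 hγ) hf hfγ (Real.log (m + n)) ((2 * n + 1) * Real.log 2)
    ((n + 1) * Real.log 2)).and (eventually_gt_atTop (-Real.log ε))
  obtain ⟨x, y, hx, hxy, hXt₀⟩ := h.exists_le_pigeo' hγ0 (Real.exp t₀)
  obtain ⟨hbounds, hεX⟩ := ht₀ _ ((Real.le_log_iff_exp_le (pigeo'_pos _)).2 hXt₀)
  obtain ⟨s, v, u, hvu, hu, hPi, hsX, hsV⟩ := exists_int_log_approxError_transpose hn hx hxy
  obtain ⟨hsmall, hexp⟩ := hbounds s _ hsX hsV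
  refine ⟨(v, u), ⟨ne_zero_of_forall_abs_approxError_lt_one hvu fun j =>
    (hu j).trans_lt (Real.exp_lt_one_iff.2 hsmall), ?_⟩, ?_⟩
  · rw [Real.rpow_def_of_pos (pigeo'_pos _)]
    exact hPi.trans (Real.exp_le_exp.2 (by linarith))
  · rw [← Real.exp_log hε]
    exact hPi.trans_lt (Real.exp_lt_exp.2 (by linarith))

end Exponents

section Mbeta

variable {n m : ℕ} {Θ : Matrix (Fin n) (Fin m) ℝ} {γ : ℝ}

theorem MultApprox.le_mbeta (h : MultApprox n m Θ γ) : (γ : EReal) ≤ mbeta n m Θ :=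
  le_sSup ⟨γ, rfl, h⟩

theorem div_le_mbeta (hn : 0 < n) (hm : 0 < m) (Θ : Matrix (Fin n) (Fin m) ℝ) :
    ((m / n : ℝ) : EReal) ≤ mbeta n m Θ :=
  (multApprox_div hn hm Θ).le_mbeta

theorem MultApprox.mono {γ' : ℝ} (h : MultApprox n m Θ γ') (hγ : γ ≤ γ') : MultApprox n m Θ γ :=
  Set.Infinite.mono (fun _ hp => ⟨hp.1, hp.2.trans
    (Real.rpow_le_rpow_of_exponent_le (one_le_pigeo' _) (neg_le_neg hγ))⟩) h

theorem multApprox_of_lt_mbeta (h : (γ : EReal) < mbeta n m Θ) : MultApprox n m Θ γ := by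
  obtain ⟨_, ⟨γ', rfl, hγ'⟩, hlt⟩ := lt_sSup_iff.1 h
  exact hγ'.mono (EReal.coe_le_coe_iff.1 hlt.le)

theorem dysonBound_le_mbeta_transpose (hn : 0 < n) (hm : 0 < m) (hγ : (m : ℝ) / n < γ)
    (h : (γ : EReal) < mbeta n m Θ) : (dysonBound n m γ : EReal) ≤ mbeta m n Θᵀ := by
  refine EReal.ge_of_forall_gt_iff_ge.1 fun f hf => ?_
  rcases le_total f 0 with hf0 | hf0
  · exact (EReal.coe_le_coe_iff.2 (hf0.trans (by positivity))).trans (div_le_mbeta hm hn Θᵀ)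
  · exact ((multApprox_of_lt_mbeta h).transpose hn hm hγ hf0 (EReal.coe_lt_coe_iff.1 hf)).le_mbeta

theorem le_mbeta_transpose_of_tendsto_dysonBound (hn : 0 < n) (hm : 0 < m)
    {l : Filter ℝ} [l.NeBot] {b : EReal}
    (hl : ∀ᶠ γ : ℝ in l, (m : ℝ) / n < γ ∧ (γ : EReal) < mbeta n m Θ)
    (hb : Tendsto (fun γ => (dysonBound n m γ : EReal)) l (𝓝 b)) : b ≤ mbeta m n Θᵀ :=
  le_of_tendsto hb (hl.mono fun _ hγ => dysonBound_le_mbeta_transpose hn hm hγ.1 hγ.2)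

theorem dysonBound_div (hn : 0 < n) (hm : 0 < m) : dysonBound n m (m / n) = n / m := by
  have hn0 : (n : ℝ) ≠ 0 := by positivity
  have hm0 : (m : ℝ) ≠ 0 := by positivity
  have hden := dysonBound_den_pos hm (γ := m / n) (by positivity)
  rw [dysonBound, div_eq_div_iff hden.ne' hm0]
  field_simp
  ring

theorem continuousAt_dysonBound (hm : 0 < m) (hγ : 0 ≤ γ) : ContinuousAt (dysonBound n m) γ :=
  ContinuousAt.div (by fun_prop) (by fun_prop) (dysonBound_den_pos hm hγ).ne'

theorem tendsto_dysonBound_one_atTop (hn : 0 < n) : Tendsto (dysonBound n 1) atTop atTop := by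
  have heq : dysonBound n 1 = fun γ : ℝ => n * γ + (n - 1) := by
    ext γ
    simp [dysonBound, add_sub_assoc]
  rw [heq]
  exact tendsto_atTop_add_const_right _ _ (tendsto_id.const_mul_atTop (by positivity))

theorem tendsto_dysonBound_atTop (hm : 2 ≤ m) :
    Tendsto (dysonBound n m) atTop (𝓝 (n / (m - 1))) := by
  have hm1 : (0 : ℝ) < m - 1 := by
    rw [sub_pos]
    exact_mod_cast hm
  have hlim (a b : ℝ) : Tendsto (fun γ : ℝ => a + b / γ) atTop (𝓝 a) := by
    simpa using (tendsto_const_nhds (x := a)).add (tendsto_id.const_div_atTop b)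
  refine ((hlim n (n - 1)).div (hlim (m - 1) m) hm1.ne').congr' ?_
  filter_upwards [eventually_gt_atTop 0] with γ hγ
  rw [Pi.div_apply, ← mul_div_mul_right _ _ hγ.ne', add_mul, add_mul, div_mul_cancel₀ _ hγ.ne',
    div_mul_cancel₀ _ hγ.ne', ← add_sub_assoc, dysonBound]

theorem dysonBound_toReal_mbeta_le (hn : 0 < n) (hm : 0 < m) (h : mbeta n m Θ ≠ ⊤) :
    (dysonBound n m (mbeta n m Θ).toReal : EReal) ≤ mbeta m n Θᵀ := by
  have hle := div_le_mbeta hn hm Θ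
  obtain ⟨β, hβ⟩ : ∃ β : ℝ, mbeta n m Θ = β :=
    ⟨_, (EReal.coe_toReal h (ne_bot_of_le_ne_bot (EReal.coe_ne_bot _) hle)).symm⟩
  rw [hβ, EReal.coe_le_coe_iff] at hle
  rw [hβ, EReal.toReal_coe]
  rcases hle.eq_or_lt with rfl | hlt
  · rw [dysonBound_div hn hm]
    exact div_le_mbeta hm hn Θᵀ
  have hcont : ContinuousAt (dysonBound n m) β :=
    continuousAt_dysonBound hm ((by positivity : (0 : ℝ) ≤ m / n).trans hle)
  refine le_mbeta_transpose_of_tendsto_dysonBound hn hm (l := 𝓝[<] β) ?_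
    (((continuous_coe_real_ereal.tendsto _).comp hcont).mono_left nhdsWithin_le_nhds)
  filter_upwards [Ioo_mem_nhdsLT hlt] with γ hγ
  exact ⟨hγ.1, hβ.symm ▸ EReal.coe_lt_coe_iff.2 hγ.2⟩

theorem le_mbeta_transpose_of_mbeta_eq_top (hn : 0 < n) (hm : 0 < m) (h : mbeta n m Θ = ⊤)
    {b : EReal} (hb : Tendsto (fun γ => (dysonBound n m γ : EReal)) atTop (𝓝 b)) :
    b ≤ mbeta m n Θᵀ :=
  le_mbeta_transpose_of_tendsto_dysonBound hn hm
    ((eventually_gt_atTop _).mono fun γ hγ => ⟨hγ, h ▸ EReal.coe_lt_top γ⟩) hb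

end Mbeta

/-- Corollary 2: β_×(ᵗΘ) ≥ (n β_×(Θ) + n − 1)/((m−1) β_×(Θ) + m), where for
β_×(Θ) = +∞ the right-hand side is read as n/(m−1) if m ≥ 2, and as +∞ if m = 1. -/
theorem mbeta_transpose_dyson (n m : ℕ) (hn : 0 < n) (hm : 0 < m)
    (Θ : Matrix (Fin n) (Fin m) ℝ) :
    (mbeta n m Θ ≠ ⊤ →
      mbeta m n Θᵀ ≥ ((((n : ℝ) * (mbeta n m Θ).toReal + n - 1) /
        (((m : ℝ) - 1) * (mbeta n m Θ).toReal + m) : ℝ) : EReal)) ∧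
    (mbeta n m Θ = ⊤ → m = 1 → mbeta m n Θᵀ = ⊤) ∧
    (mbeta n m Θ = ⊤ → 2 ≤ m → mbeta m n Θᵀ ≥ (((n : ℝ) / ((m : ℝ) - 1) : ℝ) : EReal)) := by
  refine ⟨dysonBound_toReal_mbeta_le hn hm, ?_, fun htop hm2 => ?_⟩
  · rintro htop rfl
    exact top_le_iff.1 <| le_mbeta_transpose_of_mbeta_eq_top hn hm htop <|
      EReal.tendsto_coe_nhds_top_iff.2 (tendsto_dysonBound_one_atTop hn)
  · exact le_mbeta_transpose_of_mbeta_eq_top hn hm htop <|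
      (continuous_coe_real_ereal.tendsto _).comp (tendsto_dysonBound_atTop hm2)
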